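/- arXiv:0710.4510 — 5 statements merged into one kernel-verified Lean document; each statement's English description precedes it below -/
import Mathlib

section
/- Let k be a field of characteristic zero, let U be a perfect Lie algebra over k (i.e. U is spanned by brackets [u₁,u₂] of its elements), and let M and N be k-vector spaces. Suppose given k-bilinear maps a_M : U × M → M, a_N : U × N → N and f : U × M → N satisfying: (1) (projected Jacobi identity) for all u₁, u₂ ∈ U and m ∈ M, f(u₁, a_M(u₂, m)) + a_N(u₁, f(u₂, m)) − f(u₂, a_M(u₁, m)) − a_N(u₂, f(u₁, m)) − f([u₁,u₂], m) = 0; and (2) (derivation property) for all u₁, u₂ ∈ U and m ∈ M, a_N(u₁, f(u₂, m)) = f([u₁,u₂], m) + f(u₂, a_M(u₁, m)). Then f(u, m) = 0 for all u ∈ U and m ∈ M. -/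
/-- Degree-zero algebraic core of Proposition 5.5: if `U` is a perfect Lie algebra
over a field `k` of characteristic zero acting (via bilinear maps `aM`, `aN`) on
vector spaces `M`, `N`, and `f : U × M → N` is bilinear satisfying the projected
Jacobi identity and the derivation property, then `f = 0`. -/
theorem stmt0 (k : Type) [Field k] [CharZero k]
    (U : Type) [LieRing U] [LieAlgebra k U]
    (hperf : Submodule.span k {x : U | ∃ u₁ u₂ : U, ⁅u₁, u₂⁆ = x} = ⊤)
    (M N : Type) [AddCommGroup M] [Module k M] [AddCommGroup N] [Module k N]
    (aM : U →ₗ[k] M →ₗ[k] M) (aN : U →ₗ[k] N →ₗ[k] N) (f : U →ₗ[k] M →ₗ[k] N)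
    (h1 : ∀ (u₁ u₂ : U) (m : M),
      f u₁ (aM u₂ m) + aN u₁ (f u₂ m) - f u₂ (aM u₁ m) - aN u₂ (f u₁ m)
        - f ⁅u₁, u₂⁆ m = 0)
    (h2 : ∀ (u₁ u₂ : U) (m : M),
      aN u₁ (f u₂ m) = f ⁅u₁, u₂⁆ m + f u₂ (aM u₁ m)) :
    ∀ (u : U) (m : M), f u m = 0 := by
  have key : ∀ (u₁ u₂ : U), f ⁅u₁, u₂⁆ = 0 := by
    intro u₁ u₂
    ext m
    have h := h1 u₁ u₂ m
    rw [h2 u₁ u₂ m, h2 u₂ u₁ m, ← lie_skew u₁ u₂, map_neg, LinearMap.neg_apply] at h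
    rw [← lie_skew u₁ u₂, map_neg, LinearMap.neg_apply, LinearMap.zero_apply, ← h]
    abel
  have hle : Submodule.span k {x : U | ∃ u₁ u₂ : U, ⁅u₁, u₂⁆ = x} ≤ LinearMap.ker f := by
    rw [Submodule.span_le]
    rintro x ⟨u₁, u₂, rfl⟩
    exact key u₁ u₂
  intro u m
  have hu : u ∈ LinearMap.ker f := hle (hperf ▸ Submodule.mem_top)
  rw [LinearMap.mem_ker.mp hu, LinearMap.zero_apply]
end

section
/- Let k be a field of characteristic zero and d ≥ 1. Let R = k[t₁,…,t_d] and S = k[x₁,…,x_d] be polynomial rings, and make R into an S-module via the k-algebra homomorphism S → End_k(R) sending x_i to the partial derivative ∂/∂t_i (this is well defined since the partial derivatives commute). Then R is an injective S-module. -/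
theorem aux_baer {k S Q : Type} [Field k] [CommRing S] [IsNoetherianRing S] [Algebra k S]
    [AddCommGroup Q] [Module S Q] [Module k Q] [IsScalarTower k S Q] (m : Ideal S)
    (ε : Q →ₗ[k] k)
    (nondeg : ∀ q : Q, (∀ s : S, ε (s • q) = 0) → q = 0)
    (tors : ∀ q : Q, ∃ n : ℕ, ∀ s ∈ m ^ n, s • q = 0)
    (rep : ∀ (l : S →ₗ[k] k) (c : ℕ), (∀ s ∈ m ^ c, l s = 0) → ∃ q : Q, ∀ s : S, ε (s • q) = l s) :
    Module.Baer S Q := by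
  intro I g
  have h1 : ∃ n : ℕ, ∀ s : I, ∀ a ∈ m ^ n, a • g s = 0 := by
    choose N hN using tors
    obtain ⟨T, hT⟩ : (LinearMap.range g).FG := by
      rw [LinearMap.range_eq_map]
      exact Submodule.FG.map g (IsNoetherian.noetherian _)
    refine ⟨T.sup N, fun s a ha => ?_⟩
    have hs : g s ∈ Submodule.span S (T : Set Q) := by rw [hT]; exact ⟨s, rfl⟩
    generalize g s = y at hs ⊢
    induction hs using Submodule.span_induction with
    | mem x hx => exact hN x a (Ideal.pow_le_pow_right (Finset.le_sup (f := N) hx) ha)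
    | zero => simp
    | add x y _ _ hx hy => rw [smul_add, hx, hy, add_zero]
    | smul b x _ hx => rw [smul_comm, hx, smul_zero]
  obtain ⟨n, hn⟩ := h1
  obtain ⟨c, hc⟩ := Ideal.exists_pow_inf_eq_pow_smul m (M := S) I
  have h2 : ∀ s : I, (s : S) ∈ m ^ (n + c) → g s = 0 := by
    intro s hs
    have h3 : (s : S) ∈ m ^ n • (I : Submodule S S) := by
      have h4 : (s : S) ∈ m ^ (n + c) • (⊤ : Submodule S S) ⊓ I := ⟨by simpa using hs, s.2⟩
      rw [hc (n + c) (by omega), Nat.add_sub_cancel] at h4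
      exact Submodule.smul_mono le_rfl inf_le_right h4
    have h5 : ∃ h : (s : S) ∈ I, g ⟨s, h⟩ = 0 := by
      refine Submodule.smul_induction_on (p := fun x => ∃ h : x ∈ I, g ⟨x, h⟩ = 0) h3 ?_ ?_
      · intro r hr y hy
        refine ⟨I.smul_mem r hy, ?_⟩
        have := hn ⟨y, hy⟩ r hr
        rw [← map_smul] at this
        exact this
      · rintro x y ⟨hx, hx'⟩ ⟨hy, hy'⟩
        refine ⟨I.add_mem hx hy, ?_⟩
        have := map_add g ⟨x, hx⟩ ⟨y, hy⟩
        rw [hx', hy', add_zero] at this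
        exact this
    exact h5.2
  let π : I →ₗ[k] (S ⧸ m ^ (n + c)) :=
    ((m ^ (n + c)).mkQ.comp I.subtype).restrictScalars k
  let f : I →ₗ[k] k := ε.comp (g.restrictScalars k)
  have hf : f ∈ LinearMap.range π.dualMap := by
    rw [LinearMap.range_dualMap_eq_dualAnnihilator_ker, Submodule.mem_dualAnnihilator]
    intro s hs
    have : (s : S) ∈ m ^ (n + c) := (Submodule.Quotient.mk_eq_zero _).1 hs
    simp [f, h2 s this]
  obtain ⟨l, hl⟩ := hf
  obtain ⟨q, hq⟩ := rep (l.comp ((m ^ (n + c)).mkQ.restrictScalars k)) (n + c) (by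
    intro s hs
    have : (m ^ (n + c)).mkQ s = 0 := (Submodule.Quotient.mk_eq_zero _).2 hs
    simp only [LinearMap.comp_apply, LinearMap.restrictScalars_apply, this, map_zero])
  refine ⟨LinearMap.toSpanSingleton S Q q, fun x hx => ?_⟩
  rw [← sub_eq_zero]
  apply nondeg
  intro s
  have h6 : ε (g (s • ⟨x, hx⟩)) = ε ((s • x) • q) := by
    rw [hq]
    exact (LinearMap.congr_fun hl (s • ⟨x, hx⟩)).symm
  rw [smul_sub, map_sub, ← map_smul g, h6, LinearMap.toSpanSingleton_apply, smul_smul, smul_eq_mul,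
    sub_self]

open MvPolynomial in
theorem aux_coeff {k : Type} [Field k] {d : ℕ}
    (φ : MvPolynomial (Fin d) k →ₐ[k] Module.End k (MvPolynomial (Fin d) k))
    (hφ : ∀ i : Fin d, φ (MvPolynomial.X i) = (MvPolynomial.pderiv i).toLinearMap)
    (a : Fin d →₀ ℕ) : ∀ (p : MvPolynomial (Fin d) k) (b : Fin d →₀ ℕ),
      ((∏ i, (b i).factorial : ℕ) : k) * coeff b (φ (monomial a 1) p) =
        ((∏ i, ((a + b) i).factorial : ℕ) : k) * coeff (a + b) p := by
  have key : ∀ f g : Fin d →₀ ℕ, monomial (f + g) (1 : k) = monomial f 1 * monomial g 1 := by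
    intro f g; simp [monomial_mul]
  have hadd : ∀ f g : Fin d →₀ ℕ, (∀ (p : MvPolynomial (Fin d) k) (b : Fin d →₀ ℕ),
      ((∏ i, (b i).factorial : ℕ) : k) * coeff b (φ (monomial f 1) p) =
        ((∏ i, ((f + b) i).factorial : ℕ) : k) * coeff (f + b) p) →
      (∀ (p : MvPolynomial (Fin d) k) (b : Fin d →₀ ℕ),
      ((∏ i, (b i).factorial : ℕ) : k) * coeff b (φ (monomial g 1) p) =
        ((∏ i, ((g + b) i).factorial : ℕ) : k) * coeff (g + b) p) →
      (∀ (p : MvPolynomial (Fin d) k) (b : Fin d →₀ ℕ),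
      ((∏ i, (b i).factorial : ℕ) : k) * coeff b (φ (monomial (f + g) 1) p) =
        ((∏ i, ((f + g + b) i).factorial : ℕ) : k) * coeff (f + g + b) p) := by
    intro f g hf hg p b
    rw [key, map_mul, Module.End.mul_apply, hf, hg, show g + (f + b) = f + g + b by abel]
  have h0 : ∀ (p : MvPolynomial (Fin d) k) (b : Fin d →₀ ℕ),
      ((∏ i, (b i).factorial : ℕ) : k) * coeff b (φ (monomial 0 1) p) =
        ((∏ i, ((0 + b) i).factorial : ℕ) : k) * coeff (0 + b) p := by
    intro p b
    rw [show monomial (0 : Fin d →₀ ℕ) (1 : k) = 1 from rfl, map_one, zero_add]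
    rfl
  induction a using Finsupp.induction_linear with
  | zero => exact h0
  | add f g hf hg => exact hadd f g hf hg
  | single i n =>
    induction n with
    | zero => rw [Finsupp.single_zero]; exact h0
    | succ n ih =>
      rw [Finsupp.single_add]
      refine hadd _ _ ih ?_
      intro p b
      rw [show monomial (Finsupp.single i 1) (1 : k) = X i from rfl, hφ]
      have h1 : ∏ j, (((Finsupp.single i 1 : Fin d →₀ ℕ) + b) j).factorial = (b i + 1) * ∏ j, (b j).factorial := by
        rw [← Finset.mul_prod_erase _ _ (Finset.mem_univ i),
          ← Finset.mul_prod_erase _ (fun j => (b j).factorial) (Finset.mem_univ i), ← mul_assoc]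
        congr 1
        · simp [add_comm 1, Nat.factorial_succ]
        · refine Finset.prod_congr rfl fun j hj => ?_
          simp [Finsupp.single_eq_of_ne (Finset.ne_of_mem_erase hj)]
      rw [h1]
      have h2 : coeff b ((pderiv i).toLinearMap p) = coeff b (pderiv i p) := rfl
      rw [h2, coeff_pderiv, add_comm b]
      push_cast
      ring

open MvPolynomial in
/-- `R = k[t₁,…,t_d]` is injective as a module over `S = k[x₁,…,x_d]`, where `S`
acts on `R` through the `k`-algebra homomorphism `S → End_k(R)` sending `x_i` to the
partial derivative `∂/∂t_i`. -/
theorem stmt3 (k : Type) [Field k] [CharZero k] (d : ℕ) (hd : 1 ≤ d)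
    (φ : MvPolynomial (Fin d) k →ₐ[k] Module.End k (MvPolynomial (Fin d) k))
    (hφ : ∀ i : Fin d, φ (MvPolynomial.X i) = (MvPolynomial.pderiv i).toLinearMap) :
    @Module.Injective (MvPolynomial (Fin d) k) _ (MvPolynomial (Fin d) k) _
      (Module.compHom _ φ.toRingHom) := by
  have hne : ∀ b : Fin d →₀ ℕ, ((∏ i, (b i).factorial : ℕ) : k) ≠ 0 := fun b =>
    Nat.cast_ne_zero.2 (Finset.prod_ne_zero_iff.2 fun i _ => Nat.factorial_ne_zero _)
  have hC := aux_coeff φ hφ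
  have hC0 : ∀ (a : Fin d →₀ ℕ) (p : MvPolynomial (Fin d) k), coeff 0 (φ (monomial a 1) p) =
      ((∏ i, (a i).factorial : ℕ) : k) * coeff a p := by
    intro a p
    simpa using hC a p 0
  have hmon : ∀ (a : Fin d →₀ ℕ) (c : k), monomial a c = c • monomial a (1 : k) := by
    intro a c; simp [smul_monomial]
  refine @Module.Baer.injective _ _ _ _ (Module.compHom _ φ.toRingHom) ?_
  refine @aux_baer k _ _ _ _ _ _ _ (Module.compHom _ φ.toRingHom) _ ?_
    (idealOfVars (Fin d) k) (lcoeff k 0) ?_ ?_ ?_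
  · refine @IsScalarTower.mk _ _ _ _ (_) _ fun x y z => ?_
    change φ (x • y) z = x • φ y z
    rw [map_smul]; rfl
  · intro q hq
    ext a
    have h := hq (monomial a 1)
    change coeff 0 (φ (monomial a 1) q) = 0 at h
    rw [hC0] at h
    simpa using (mul_eq_zero.1 h).resolve_left (hne a)
  · intro q
    refine ⟨q.totalDegree + 1, fun s hs => ?_⟩
    change φ s q = 0
    rw [mem_pow_idealOfVars_iff] at hs
    rw [s.as_sum, map_sum, LinearMap.sum_apply]
    refine Finset.sum_eq_zero fun a ha => ?_
    rw [hmon, map_smul, LinearMap.smul_apply]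
    have h0 : φ (monomial a 1) q = 0 := by
      ext b
      have h := hC a q b
      rw [coeff_eq_zero_of_totalDegree_lt (d := a + b), mul_zero] at h
      · simpa using (mul_eq_zero.1 h).resolve_left (hne b)
      · have := hs a ha
        change _ < Finsupp.degree (a + b)
        rw [map_add]
        omega
    rw [h0, smul_zero]
  · intro l c hl
    have hfin : {a : Fin d →₀ ℕ | Finsupp.degree a < c}.Finite :=
      (Finsupp.finite_of_degree_le c).subset fun a (ha : Finsupp.degree a < c) =>
        (show Finsupp.degree a ≤ c from le_of_lt ha)
    let q : MvPolynomial (Fin d) k := ∑ a ∈ hfin.toFinset,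
      monomial a (l (monomial a 1) / ((∏ i, (a i).factorial : ℕ) : k))
    have hq : ∀ a, ((∏ i, (a i).factorial : ℕ) : k) * coeff a q = l (monomial a 1) := by
      intro a
      simp only [q, coeff_sum, coeff_monomial, Finset.sum_ite_eq']
      split_ifs with h
      · rw [mul_div_cancel₀ _ (hne a)]
      · rw [mul_zero, hl]
        rw [mem_pow_idealOfVars_iff]
        intro b hb
        have : b = a := by simpa using (support_monomial_subset hb)
        subst this
        simpa using h
    refine ⟨q, fun s => ?_⟩
    change coeff 0 (φ s q) = l s
    induction s using MvPolynomial.induction_on' with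
    | monomial a c => 
      rw [hmon, map_smul, map_smul, LinearMap.smul_apply, coeff_smul, hC0, hq]
    | add x y hx hy => rw [map_add, map_add, LinearMap.add_apply, coeff_add, hx, hy]
end

section
/- Let k be a field of characteristic zero and d ≥ 1. Let R = k[t₁,…,t_d] and S = k[x₁,…,x_d] be polynomial rings. Let V be a k-vector space equipped with d pairwise commuting, locally nilpotent k-linear endomorphisms N₁,…,N_d (locally nilpotent means: for every v ∈ V and every i there is m with N_i^m(v) = 0). Make V ⊗_k R into an S-module via the k-algebra homomorphism S → End_k(V ⊗_k R) sending x_i to N_i ⊗ id + id ⊗ ∂/∂t_i (these endomorphisms pairwise commute). Then V ⊗_k R is an injective S-module. -/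
open scoped TensorProduct

open MvPolynomial in
theorem aux_exists_factor {k A B C : Type} [Field k] [AddCommGroup A] [AddCommGroup B]
    [AddCommGroup C] [Module k A] [Module k B] [Module k C] (f : A →ₗ[k] B) (g : A →ₗ[k] C)
    (h : LinearMap.ker f ≤ LinearMap.ker g) : ∃ q : B →ₗ[k] C, ∀ a, q (f a) = g a := by
  obtain ⟨l, hl⟩ := LinearMap.exists_leftInverse_of_injective
    ((LinearMap.ker f).liftQ f le_rfl) (Submodule.ker_liftQ_eq_bot' _ _ rfl)
  refine ⟨(LinearMap.ker f).liftQ g h ∘ₗ l, fun a => ?_⟩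
  have := LinearMap.congr_fun hl (Submodule.Quotient.mk a)
  simp only [LinearMap.comp_apply, Submodule.liftQ_apply, LinearMap.id_apply] at this
  simp [this]

open MvPolynomial in
theorem aux_baer_s4 {k : Type} [Field k] {d : ℕ} {V M : Type} [AddCommGroup V] [Module k V]
    [AddCommGroup M] [Module k M] [Module (MvPolynomial (Fin d) k) M]
    [IsScalarTower k (MvPolynomial (Fin d) k) M] (ev : M →ₗ[k] V)
    (ha : ∀ (m : M) (i : Fin d), ∃ n : ℕ, (X i ^ n : MvPolynomial (Fin d) k) • m = 0)
    (hb : ∀ (n : ℕ) (ψ : MvPolynomial (Fin d) k →ₗ[k] V),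
      (∀ s ∈ (Ideal.span (Set.range (X : Fin d → MvPolynomial (Fin d) k))) ^ n, ψ s = 0) →
      ∃ m : M, ∀ s : MvPolynomial (Fin d) k, ev (s • m) = ψ s)
    (hc : ∀ m : M, (∀ s : MvPolynomial (Fin d) k, ev (s • m) = 0) → m = 0) :
    Module.Baer (MvPolynomial (Fin d) k) M := by
  intro I g
  set 𝔪 := Ideal.span (Set.range (X : Fin d → MvPolynomial (Fin d) k)) with h𝔪
  have hrad : 𝔪 ≤ (LinearMap.range g).annihilator.radical := by
    rw [h𝔪, Ideal.span_le]
    rintro _ ⟨i, rfl⟩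
    obtain ⟨T, hT⟩ : (LinearMap.range g).FG := by
      rw [LinearMap.range_eq_map]
      exact (IsNoetherian.noetherian (⊤ : Submodule _ I)).map g
    choose n hn using fun m => ha m i
    refine ⟨T.sup n, ?_⟩
    rw [← hT, Submodule.mem_annihilator_span]
    rintro ⟨t, ht⟩
    obtain ⟨c, hc⟩ := Nat.exists_eq_add_of_le (Finset.le_sup (f := n) ht)
    rw [hc, add_comm, pow_add, mul_smul]
    simp [hn]
  obtain ⟨n, hn⟩ := Ideal.exists_pow_le_of_le_radical_of_fg hrad
    (IsNoetherian.noetherian _)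
  obtain ⟨c, hc'⟩ := Ideal.exists_pow_inf_eq_pow_smul 𝔪 (I : Submodule (MvPolynomial (Fin d) k) (MvPolynomial (Fin d) k))
  have hker : ∀ a : I, (a : MvPolynomial (Fin d) k) ∈ 𝔪 ^ (n + c) → g a = 0 := by
    intro a haa
    have h1 : (a : MvPolynomial (Fin d) k) ∈ 𝔪 ^ n • I := by
      have h2 := hc' (n + c) (Nat.le_add_left _ _)
      rw [Nat.add_sub_cancel] at h2
      have h3 : (a : MvPolynomial (Fin d) k) ∈ 𝔪 ^ n • (𝔪 ^ c • ⊤ ⊓ I) := by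
        rw [← h2]
        exact ⟨by simpa using haa, a.2⟩
      exact (Submodule.smul_mono le_rfl inf_le_right : _ ≤ 𝔪 ^ n • I) h3
    have h4 : ∀ x ∈ 𝔪 ^ n • I, ∃ hx : x ∈ I, g ⟨x, hx⟩ = 0 := by
      intro x hx
      induction hx using Submodule.smul_induction_on' with
      | smul r hr y hy =>
        refine ⟨I.smul_mem r hy, ?_⟩
        have : (⟨r • y, I.smul_mem r hy⟩ : I) = r • ⟨y, hy⟩ := rfl
        rw [this, map_smul]
        exact (Submodule.mem_annihilator.1 (hn hr)) _ ⟨_, rfl⟩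
      | add x hx y hy h1 h2 =>
        obtain ⟨hx', h1⟩ := h1
        obtain ⟨hy', h2⟩ := h2
        refine ⟨I.add_mem hx' hy', ?_⟩
        have : (⟨x + y, I.add_mem hx' hy'⟩ : I) = ⟨x, hx'⟩ + ⟨y, hy'⟩ := rfl
        rw [this, map_add, h1, h2, add_zero]
    exact (h4 _ h1).2
  let P : Submodule k (MvPolynomial (Fin d) k) := (𝔪 ^ (n + c)).restrictScalars k
  obtain ⟨q, hq⟩ := aux_exists_factor (k := k) (P.mkQ ∘ₗ (I.subtype.restrictScalars k))
    (ev ∘ₗ g.restrictScalars k) (by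
      intro a haa
      have : (a : MvPolynomial (Fin d) k) ∈ P := by simpa using haa
      simp [hker a this])
  obtain ⟨m, hm⟩ := hb (n + c) (q ∘ₗ P.mkQ) (by
    intro s hs
    have : P.mkQ s = 0 := by
      rw [Submodule.mkQ_apply, Submodule.Quotient.mk_eq_zero]; exact hs
    rw [LinearMap.comp_apply, this, map_zero])
  refine ⟨LinearMap.toSpanSingleton _ _ m, fun x hx => ?_⟩
  rw [LinearMap.toSpanSingleton_apply, ← sub_eq_zero]
  apply hc
  intro s
  have h5 := hq (s • ⟨x, hx⟩)
  rw [smul_sub, map_sub, ← mul_smul, hm, ← map_smul]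
  simp only [LinearMap.comp_apply, LinearMap.restrictScalars_apply] at h5 ⊢
  rw [← h5]
  exact sub_self _

theorem aux_add_nil {k M : Type} [Field k] [AddCommGroup M] [Module k M] (A B : Module.End k M)
    (h : Commute A B) (K : ℕ) : ∀ (n m : ℕ) (w : M), n + m ≤ K → (A ^ n) w = 0 → (B ^ m) w = 0 →
      ∃ L, ((A + B) ^ L) w = 0 := by
  induction K with
  | zero =>
    intro n m w hK hA hB
    obtain rfl : n = 0 := by omega
    exact ⟨0, by simpa using hA⟩
  | succ K ih =>
    intro n m w hK hA hB
    rcases n with _ | n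
    · exact ⟨0, by simpa using hA⟩
    rcases m with _ | m
    · exact ⟨0, by simpa using hB⟩
    obtain ⟨L1, h1⟩ := ih n (m + 1) (A w) (by omega) (by simpa [pow_succ] using hA) (by
      have := LinearMap.congr_fun (h.pow_right (m + 1)).eq w
      simp only [Module.End.mul_apply] at this
      rw [← this, hB, map_zero])
    obtain ⟨L2, h2⟩ := ih (n + 1) m (B w) (by omega) (by
      have := LinearMap.congr_fun (h.pow_left (n + 1)).eq w
      simp only [Module.End.mul_apply] at this
      rw [this, hA, map_zero]) (by simpa [pow_succ] using hB)
    refine ⟨L1 + L2 + 1, ?_⟩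
    rw [pow_succ, Module.End.mul_apply, LinearMap.add_apply, map_add]
    nth_rewrite 1 [add_comm L1 L2]
    rw [pow_add, pow_add, Module.End.mul_apply, Module.End.mul_apply, h1, h2]
    simp

theorem aux_pderiv_nil {k : Type} [Field k] {d : ℕ} (i : Fin d) (p : MvPolynomial (Fin d) k) :
    ∃ n, ((MvPolynomial.pderiv i).toLinearMap ^ n : Module.End k (MvPolynomial (Fin d) k)) p = 0 := by
  have key : ∀ n (p : MvPolynomial (Fin d) k), (∀ a, n ≤ a i → p.coeff a = 0) →
      ((MvPolynomial.pderiv i).toLinearMap ^ n : Module.End k (MvPolynomial (Fin d) k)) p = 0 := by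
    intro n
    induction n with
    | zero => intro p h; ext a; simpa using h a
    | succ n ih =>
      intro p h
      rw [pow_succ, Module.End.mul_apply]
      apply ih
      intro a ha
      have : (MvPolynomial.pderiv i p).coeff a = 0 := by
        rw [MvPolynomial.coeff_pderiv, h _ (by simpa using ha), zero_mul]
      exact this
  refine ⟨p.degreeOf i + 1, key _ p fun a ha => ?_⟩
  by_contra hne
  have := MvPolynomial.monomial_le_degreeOf i (MvPolynomial.mem_support_iff.2 hne)
  omega

theorem aux_ind {d : ℕ} {P : (Fin d →₀ ℕ) → Prop} (h0 : P 0)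
    (h1 : ∀ b i, P b → P (b + Finsupp.single i 1)) (b : Fin d →₀ ℕ) : P b := by
  induction b using Finsupp.induction with
  | zero => exact h0
  | single_add i n f _ _ ih =>
    rw [add_comm]
    clear * - ih h1
    induction n with
    | zero => simpa using ih
    | succ n ihn => rw [Finsupp.single_add, ← add_assoc]; exact h1 _ _ ihn

def auxFac {d : ℕ} (b : Fin d →₀ ℕ) : ℕ := ∏ i, (b i).factorial

theorem auxFac_succ {d : ℕ} (b : Fin d →₀ ℕ) (i : Fin d) :
    auxFac (b + Finsupp.single i 1) = (b i + 1) * auxFac b := by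
  unfold auxFac
  rw [← Finset.mul_prod_erase _ _ (Finset.mem_univ i),
    ← Finset.mul_prod_erase _ (fun j => (b j).factorial) (Finset.mem_univ i), ← mul_assoc]
  congr 1
  · simp [Nat.factorial_succ]
  · apply Finset.prod_congr rfl
    intro j hj
    have : i ≠ j := fun h => by simp [h] at hj
    simp [Finsupp.single_eq_of_ne' this]

theorem auxFac_ne {d : ℕ} (b : Fin d →₀ ℕ) : auxFac b ≠ 0 :=
  Finset.prod_ne_zero_iff.2 fun _ _ => Nat.factorial_ne_zero _

noncomputable def auxCf (k : Type) [Field k] {d : ℕ} (V : Type) [AddCommGroup V] [Module k V]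
    (a : Fin d →₀ ℕ) : V ⊗[k] MvPolynomial (Fin d) k →ₗ[k] V :=
  Finsupp.lapply a ∘ₗ
    (TensorProduct.equivFinsuppOfBasisRight (MvPolynomial.basisMonomials (Fin d) k)).toLinearMap

section
variable {k : Type} [Field k] {d : ℕ} {V : Type} [AddCommGroup V] [Module k V]

theorem auxCf_tmul (a : Fin d →₀ ℕ) (v : V) (p : MvPolynomial (Fin d) k) :
    auxCf k V a (v ⊗ₜ p) = p.coeff a • v := by
  simp [auxCf, TensorProduct.equivFinsuppOfBasisRight_apply_tmul_apply]
  rfl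

theorem auxCf_ext (m : V ⊗[k] MvPolynomial (Fin d) k) (h : ∀ a, auxCf k V a m = 0) : m = 0 := by
  apply (TensorProduct.equivFinsuppOfBasisRight
    (MvPolynomial.basisMonomials (Fin d) k)).map_eq_zero_iff.1
  ext a
  exact h a

theorem auxCf_rTensor (a : Fin d →₀ ℕ) (f : Module.End k V) (m : V ⊗[k] MvPolynomial (Fin d) k) :
    auxCf k V a (f.rTensor _ m) = f (auxCf k V a m) := by
  induction m with
  | zero => simp
  | tmul v p => simp [auxCf_tmul]
  | add x y hx hy => simp [hx, hy]

theorem auxCf_lTensor (a : Fin d →₀ ℕ) (i : Fin d) (m : V ⊗[k] MvPolynomial (Fin d) k) :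
    auxCf k V a ((MvPolynomial.pderiv i).toLinearMap.lTensor V m) =
      ((a i : k) + 1) • auxCf k V (a + Finsupp.single i 1) m := by
  induction m with
  | zero => simp
  | tmul v p => simp [auxCf_tmul, MvPolynomial.coeff_pderiv, smul_smul, mul_comm]
  | add x y hx hy => simp only [map_add, hx, hy, smul_add]

theorem auxCf_zero_mul (p : MvPolynomial (Fin d) k) (m : V ⊗[k] MvPolynomial (Fin d) k) :
    auxCf k V 0 ((LinearMap.mulLeft k p).lTensor V m) = p.coeff 0 • auxCf k V 0 m := by
  induction m with
  | zero => simp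
  | tmul v p => simp [auxCf_tmul, ← MvPolynomial.constantCoeff_eq, mul_smul]
  | add x y hx hy => simp only [map_add, hx, hy, smul_add]

noncomputable abbrev auxD (f : Module.End k V) (i : Fin d) :
    Module.End k (V ⊗[k] MvPolynomial (Fin d) k) :=
  f.rTensor (MvPolynomial (Fin d) k) + LinearMap.lTensor V (MvPolynomial.pderiv i).toLinearMap

theorem aux_leibniz (i : Fin d) (f : Module.End k V) (p : MvPolynomial (Fin d) k)
    (m : V ⊗[k] MvPolynomial (Fin d) k) :
    auxD f i ((LinearMap.mulLeft k p).lTensor V m) =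
    (LinearMap.mulLeft k p).lTensor V (auxD f i m) +
    (LinearMap.mulLeft k (MvPolynomial.pderiv i p)).lTensor V m := by
  induction m with
  | zero => simp
  | tmul v q =>
    simp [TensorProduct.tmul_add, add_assoc, mul_comm]
  | add x y hx hy => rw [map_add, map_add, hx, hy, map_add, map_add, map_add]; abel

theorem aux_exists_chi (N : Fin d → Module.End k V)
    (hcomm : ∀ i j : Fin d, Commute (N i) (N j)) :
    ∃ χ : MvPolynomial (Fin d) k →ₐ[k] Module.End k V, ∀ i, χ (MvPolynomial.X i) = N i := by
  have := Algebra.isMulCommutative_adjoin k (s := Set.range N) (by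
    rintro _ ⟨i, rfl⟩ _ ⟨j, rfl⟩; exact hcomm i j)
  letI : CommSemiring (Algebra.adjoin k (Set.range N)) :=
    { (inferInstance : Semiring (Algebra.adjoin k (Set.range N))) with
      mul_comm := fun a b => this.is_comm.comm a b }
  refine ⟨(Algebra.adjoin k (Set.range N)).val.comp
    (MvPolynomial.aeval (S₁ := Algebra.adjoin k (Set.range N))
      fun i => (⟨N i, Algebra.subset_adjoin ⟨i, rfl⟩⟩ : Algebra.adjoin k (Set.range N))), fun i => ?_⟩
  simp

theorem aux_monomial_dvd (a : Fin d →₀ ℕ) (i : Fin d) (n : ℕ) (h : n ≤ a i) :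
    (MvPolynomial.X i ^ n : MvPolynomial (Fin d) k) ∣ MvPolynomial.monomial a 1 := by
  rw [MvPolynomial.X_pow_eq_monomial, MvPolynomial.monomial_dvd_monomial]
  exact ⟨Or.inr (by simpa using h), by simp⟩

theorem aux_finite (n : Fin d → ℕ) : {a : Fin d →₀ ℕ | ∀ i, a i < n i}.Finite := by
  apply (Set.finite_Iic (Finsupp.equivFunOnFinite.symm n)).subset
  intro a ha i
  exact (ha i).le

/-- the flat section with given value at the origin -/
theorem aux_flat [CharZero k] (N : Fin d → Module.End k V)
    (hcomm : ∀ i j : Fin d, Commute (N i) (N j))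
    (hnil : ∀ (i : Fin d) (v : V), ∃ m : ℕ, (N i ^ m) v = 0) (v : V) :
    ∃ e : V ⊗[k] MvPolynomial (Fin d) k, auxCf k V 0 e = v ∧
      ∀ i, auxD (N i) i e = 0 := by
  obtain ⟨χ, hχ⟩ := aux_exists_chi (fun i => - N i) (fun i j => ((hcomm i j).neg_left).neg_right)
  choose n hn using fun i => hnil i v
  let c : (Fin d →₀ ℕ) → V := fun a => ((auxFac a : k)⁻¹) • χ (MvPolynomial.monomial a 1) v
  have hfin := aux_finite n
  have hc0 : ∀ a, a ∉ hfin.toFinset → c a = 0 := by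
    intro a ha
    simp only [Set.Finite.mem_toFinset, Set.mem_setOf_eq, not_forall, not_lt] at ha
    obtain ⟨i, hi⟩ := ha
    obtain ⟨r, hr⟩ := aux_monomial_dvd (k := k) a i (n i) hi
    simp only [c]
    rw [hr, mul_comm, map_mul, map_pow, hχ, Module.End.mul_apply, neg_pow, Module.End.mul_apply,
      hn]
    simp
  have hcf : ∀ a, auxCf k V a (∑ b ∈ hfin.toFinset, c b ⊗ₜ MvPolynomial.monomial b (1 : k)) = c a := by
    intro a
    classical
    rw [map_sum]
    simp only [auxCf_tmul, MvPolynomial.coeff_monomial, ite_smul, one_smul, zero_smul]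
    rw [Finset.sum_ite_eq']
    split_ifs with h
    · rfl
    · exact (hc0 a h).symm
  refine ⟨_, (hcf 0).trans ?_, fun i => auxCf_ext _ fun a => ?_⟩
  · have : MvPolynomial.monomial (0 : Fin d →₀ ℕ) (1 : k) = 1 := rfl
    simp [c, auxFac, this]
  · rw [LinearMap.add_apply, map_add, auxCf_rTensor, auxCf_lTensor, hcf, hcf]
    simp only [c]
    have h1 : MvPolynomial.monomial (a + Finsupp.single i 1) (1 : k) =
        MvPolynomial.X i * MvPolynomial.monomial a 1 := by
      rw [MvPolynomial.X, MvPolynomial.monomial_mul, add_comm, one_mul]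
    have h2 : ((a i : k) + 1) ≠ 0 := Nat.cast_add_one_ne_zero _
    rw [h1, map_mul, hχ, auxFac_succ, smul_smul]
    push_cast
    rw [mul_inv, ← mul_assoc, mul_inv_cancel₀ h2]
    simp

end

/-- Let `V` be a `k`-vector space with `d` pairwise commuting locally nilpotent
endomorphisms `N₁,…,N_d`, and let `S = k[x₁,…,x_d]` act on `V ⊗ₖ R`
(`R = k[t₁,…,t_d]`) via `x_i ↦ N_i ⊗ id + id ⊗ ∂/∂t_i`. Then `V ⊗ₖ R` is an
injective `S`-module. -/
theorem stmt4 (k : Type) [Field k] [CharZero k] (d : ℕ) (hd : 1 ≤ d)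
    (V : Type) [AddCommGroup V] [Module k V]
    (N : Fin d → Module.End k V)
    (hcomm : ∀ i j : Fin d, Commute (N i) (N j))
    (hnil : ∀ (i : Fin d) (v : V), ∃ m : ℕ, (N i ^ m) v = 0)
    (φ : MvPolynomial (Fin d) k →ₐ[k]
      Module.End k (V ⊗[k] MvPolynomial (Fin d) k))
    (hφ : ∀ i : Fin d, φ (MvPolynomial.X i) =
      LinearMap.rTensor (MvPolynomial (Fin d) k) (N i) +
        LinearMap.lTensor V (MvPolynomial.pderiv i).toLinearMap) :
    @Module.Injective (MvPolynomial (Fin d) k) _ (V ⊗[k] MvPolynomial (Fin d) k) _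
      (Module.compHom _ φ.toRingHom) := by
  have hev : ∀ (e : V ⊗[k] MvPolynomial (Fin d) k), (∀ i, φ (MvPolynomial.X i) e = 0) →
      ∀ (b : Fin d →₀ ℕ) (p : MvPolynomial (Fin d) k),
      auxCf k V 0 (φ (MvPolynomial.monomial b 1) ((LinearMap.mulLeft k p).lTensor V e)) =
        ((auxFac b : k) * p.coeff b) • auxCf k V 0 e := by
    intro e he b
    induction b using aux_ind with
    | h0 =>
      intro p
      have : MvPolynomial.monomial (0 : Fin d →₀ ℕ) (1 : k) = 1 := rfl
      rw [this, map_one, Module.End.one_apply, auxCf_zero_mul]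
      simp [auxFac]
    | h1 b i ih =>
      intro p
      have h1 : MvPolynomial.monomial (b + Finsupp.single i 1) (1 : k) =
          MvPolynomial.monomial b 1 * MvPolynomial.X i := by
        rw [MvPolynomial.X, MvPolynomial.monomial_mul, one_mul]
      have h2 := he i
      rw [hφ] at h2
      rw [h1, map_mul, Module.End.mul_apply, hφ, aux_leibniz, h2, map_zero, zero_add, ih,
        MvPolynomial.coeff_pderiv, auxFac_succ]
      push_cast
      congr 1
      ring
  letI : Module (MvPolynomial (Fin d) k) (V ⊗[k] MvPolynomial (Fin d) k) :=
    Module.compHom _ φ.toRingHom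
  have hsm : ∀ (s : MvPolynomial (Fin d) k) (m : V ⊗[k] MvPolynomial (Fin d) k),
    s • m = φ s m := fun _ _ => rfl
  have hst : IsScalarTower k (MvPolynomial (Fin d) k) (V ⊗[k] MvPolynomial (Fin d) k) :=
    ⟨fun c s m => by rw [hsm, hsm, map_smul, LinearMap.smul_apply]⟩
  refine Module.Baer.injective (aux_baer_s4 (k := k) (V := V) (auxCf k V 0) ?_ ?_ ?_)
  · intro m i
    simp only [hsm, map_pow, hφ]
    induction m with
    | zero => exact ⟨0, by simp⟩
    | tmul v p =>
      obtain ⟨n, hn⟩ := hnil i v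
      obtain ⟨n', hn'⟩ := aux_pderiv_nil i p
      refine aux_add_nil _ _ ?_ _ n n' _ le_rfl ?_ ?_
      · ext <;> simp
      · rw [LinearMap.rTensor_pow, LinearMap.rTensor_tmul, hn, TensorProduct.zero_tmul]
      · rw [LinearMap.lTensor_pow, LinearMap.lTensor_tmul, hn', TensorProduct.tmul_zero]
    | add x y hx hy =>
      obtain ⟨n, hn⟩ := hx
      obtain ⟨n', hn'⟩ := hy
      refine ⟨n + n', ?_⟩
      rw [map_add]
      nth_rewrite 1 [add_comm n n']
      rw [pow_add, pow_add, Module.End.mul_apply, Module.End.mul_apply, hn, hn']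
      simp
  · intro n ψ hψ
    choose e he0 he using aux_flat N hcomm hnil
    have hfin := aux_finite (d := d) (fun _ => n)
    refine ⟨∑ a ∈ hfin.toFinset, (LinearMap.mulLeft k (MvPolynomial.monomial a
      ((auxFac a : k)⁻¹))).lTensor V (e (ψ (MvPolynomial.monomial a 1))), fun s => ?_⟩
    have hmon : ∀ b : Fin d →₀ ℕ, auxCf k V 0 (φ (MvPolynomial.monomial b 1)
        (∑ a ∈ hfin.toFinset, (LinearMap.mulLeft k (MvPolynomial.monomial a
      ((auxFac a : k)⁻¹))).lTensor V (e (ψ (MvPolynomial.monomial a 1))))) =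
        ψ (MvPolynomial.monomial b 1) := by
      intro b
      classical
      rw [map_sum, map_sum]
      have : ∀ a ∈ hfin.toFinset, auxCf k V 0 (φ (MvPolynomial.monomial b 1)
        ((LinearMap.mulLeft k (MvPolynomial.monomial a
      ((auxFac a : k)⁻¹))).lTensor V (e (ψ (MvPolynomial.monomial a 1))))) =
        if a = b then ψ (MvPolynomial.monomial b 1) else 0 := by
        intro a _
        rw [hev _ (fun i => by rw [hφ]; exact he _ i), he0, MvPolynomial.coeff_monomial]
        split_ifs with h
        · subst h
          rw [mul_inv_cancel₀ (Nat.cast_ne_zero.2 (auxFac_ne a)), one_smul]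
        · simp
      rw [Finset.sum_congr rfl this, Finset.sum_ite_eq']
      split_ifs with h
      · rfl
      · symm
        apply hψ
        simp only [Set.Finite.mem_toFinset, Set.mem_ofPred_eq, not_forall, not_lt] at h
        obtain ⟨i, hi⟩ := h
        exact Ideal.mem_of_dvd _ (aux_monomial_dvd (k := k) b i n hi)
          (Ideal.pow_mem_pow (Ideal.subset_span (Set.mem_range_self i)) n)
    rw [hsm]
    generalize (∑ a ∈ hfin.toFinset, (LinearMap.mulLeft k (MvPolynomial.monomial a
      ((auxFac a : k)⁻¹))).lTensor V (e (ψ (MvPolynomial.monomial a 1)))) = m at hmon ⊢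
    induction s using MvPolynomial.induction_on' with
    | monomial b c =>
      have : MvPolynomial.monomial b c = c • MvPolynomial.monomial b (1 : k) := by
        rw [MvPolynomial.smul_monomial, smul_eq_mul, mul_one]
      rw [this, map_smul, LinearMap.smul_apply, map_smul, hmon, map_smul]
    | add p q hp hq => rw [map_add, LinearMap.add_apply, map_add, hp, hq, map_add]
  · intro m hm
    simp only [hsm] at hm
    have hNφ : ∀ i s, Commute ((N i).rTensor (MvPolynomial (Fin d) k)) (φ s) := by
      intro i s
      induction s using MvPolynomial.induction_on with
      | C a =>
        have : φ (MvPolynomial.C a) = algebraMap k _ a := φ.commutes a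
        rw [this]
        exact (Algebra.commutes a _).symm
      | add p q hp hq => rw [map_add]; exact hp.add_right hq
      | mul_X p j hp =>
        rw [map_mul]
        refine hp.mul_right ?_
        rw [hφ]
        refine Commute.add_right ?_ ?_
        · rw [commute_iff_eq, Module.End.mul_eq_comp, Module.End.mul_eq_comp,
            ← LinearMap.rTensor_comp, ← LinearMap.rTensor_comp]
          exact congrArg _ (hcomm i j).eq
        · ext <;> simp
    refine auxCf_ext m fun a => ?_
    induction a using aux_ind generalizing m with
    | h0 => simpa using hm 1
    | h1 b i ih =>
      have h1 := ih (φ (MvPolynomial.X i) m) (fun s => by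
        rw [← Module.End.mul_apply, ← map_mul]; exact hm _)
      have h2 := ih ((N i).rTensor (MvPolynomial (Fin d) k) m) (fun s => by
        have := LinearMap.congr_fun (hNφ i s).eq m
        rw [Module.End.mul_apply, Module.End.mul_apply] at this
        rw [← this, auxCf_rTensor, hm, map_zero])
      rw [hφ, LinearMap.add_apply, map_add, h2, zero_add, auxCf_lTensor] at h1
      exact (smul_eq_zero.1 h1).resolve_left (Nat.cast_add_one_ne_zero _)
end

section
/- Let k be a field of characteristic zero and d ≥ 1. Let R = k[t₁,…,t_d] and S = k[x₁,…,x_d], let V be a k-vector space with d pairwise commuting, locally nilpotent k-linear endomorphisms N₁,…,N_d, and make M = V ⊗_k R into an S-module via x_i ↦ N_i ⊗ id + id ⊗ ∂/∂t_i. Let k itself be the S-module S/(x₁,…,x_d). Then Ext^i_S(k, M) = 0 for all i ≥ 1, and Ext^0_S(k, M) = Hom_S(k, M) is isomorphic to the space of joint invariants {m ∈ M : x_i·m = 0 for all i = 1,…,d}. -/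
open scoped TensorProduct

/-- The joint invariants `{m ∈ M : s i • m = 0 for all i}` of a family of scalars,
as an additive subgroup of `M`. -/
def jointInvariants {S M : Type} [Ring S] [AddCommGroup M] [Module S M]
    {ι : Type} (s : ι → S) : AddSubgroup M where
  carrier := {m | ∀ i, s i • m = 0}
  add_mem' := by
    intro a b ha hb i
    rw [smul_add, ha i, hb i, add_zero]
  zero_mem' := by
    intro i
    rw [smul_zero]
  neg_mem' := by
    intro a ha i
    rw [smul_neg, ha i, neg_zero]

/-- The Ext group `Ext^i_S(A, B)` of two `S`-modules. -/
noncomputable def extGroup (S : Type) [CommRing S] (A B : ModuleCat S) (i : ℕ) :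
    ModuleCat S :=
  ((Ext S (ModuleCat S) i).obj (Opposite.op A)).obj B

open CategoryTheory

lemma aux_ext_of_abelianExt {S : Type} [CommRing S] (A B : ModuleCat.{0} S) (n : ℕ)
    (h : Subsingleton (Abelian.Ext.{0} A B (n+1))) : Subsingleton (extGroup S A B (n+1)) := by
  let P := projectiveResolution A
  suffices hz : Limits.IsZero ((P.complex.linearYonedaObj S B).homology (n+1)) from
    ModuleCat.subsingleton_of_isZero (hz.of_iso (P.isoExt (n+1) B))
  rw [← HomologicalComplex.exactAt_iff_isZero_homology,
    HomologicalComplex.exactAt_iff' _ n (n+1) (n+2) (by simp) (by simp),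
    ShortComplex.moduleCat_exact_iff]
  intro x hx
  have hx' : P.complex.d (n+2) (n+1) ≫ x = 0 := hx
  have h0 := (P.extMk_eq_zero_iff x (n+2) rfl hx' n rfl).1 (Subsingleton.elim _ _)
  obtain ⟨g, hg⟩ := h0
  exact ⟨g, hg⟩

lemma aux_step {C : Type*} [Category C] [Abelian C] [HasExt.{0} C] (T : ShortComplex C)
    (hT : T.ShortExact) (Y : C)
    (h1 : ∀ n, Subsingleton (Abelian.Ext.{0} T.X₁ Y (n+1)))
    (h2 : ∀ n, Subsingleton (Abelian.Ext.{0} T.X₂ Y (n+1)))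
    (h0 : ∀ f : T.X₁ ⟶ Y, ∃ g : T.X₂ ⟶ Y, T.f ≫ g = f) (n : ℕ) :
    Subsingleton (Abelian.Ext.{0} T.X₃ Y (n+1)) := by
  refine subsingleton_of_forall_eq 0 fun x => ?_
  obtain ⟨y, rfl⟩ := Abelian.Ext.contravariant_sequence_exact₃ hT Y x (Subsingleton.elim _ _)
    (n₀ := n) (by lia)
  cases n with
  | zero =>
    obtain ⟨f, rfl⟩ := (Abelian.Ext.mk₀_bijective _ _).2 y
    obtain ⟨g, rfl⟩ := h0 f
    rw [← Abelian.Ext.mk₀_comp_mk₀, ShortComplex.ShortExact.extClass_comp_assoc]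
  | succ n =>
    rw [Subsingleton.elim y 0, Abelian.Ext.comp_zero]

open MvPolynomial in
lemma aux_int (k : Type) [Field k] [CharZero k] (d : ℕ) (j : Fin d) :
    ∃ J : MvPolynomial (Fin d) k →ₗ[k] MvPolynomial (Fin d) k,
      (pderiv j).toLinearMap ∘ₗ J = LinearMap.id ∧
      ∀ i, i ≠ j → (pderiv i).toLinearMap ∘ₗ J = J ∘ₗ (pderiv i).toLinearMap := by
  have hJ : ∃ J : MvPolynomial (Fin d) k →ₗ[k] MvPolynomial (Fin d) k,
      ∀ a (c : k), J (monomial a c) = monomial (a + Finsupp.single j 1) (c * ((a j : k) + 1)⁻¹) := by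
    refine ⟨(basisMonomials (Fin d) k).constr k
      (fun a => monomial (a + Finsupp.single j 1) (((a j : k) + 1)⁻¹)), fun a c => ?_⟩
    have : (monomial a c : MvPolynomial (Fin d) k) = c • basisMonomials (Fin d) k a := by
      simp [smul_monomial]
    rw [this, map_smul, Module.Basis.constr_basis, smul_monomial, smul_eq_mul]
  obtain ⟨J, hJ⟩ := hJ
  refine ⟨J, ?_, ?_⟩
  · refine (basisMonomials (Fin d) k).ext fun a => ?_
    have : (a j : k) + 1 ≠ 0 := by exact_mod_cast Nat.succ_ne_zero (a j)
    simp [hJ, pderiv_monomial, this]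
  · intro i hij
    refine (basisMonomials (Fin d) k).ext fun a => ?_
    by_cases h : a i = 0
    · simp [hJ, pderiv_monomial, h, hij]
    · have : a + Finsupp.single j 1 - Finsupp.single i 1
        = a - Finsupp.single i 1 + Finsupp.single j 1 := by
        ext l
        by_cases h1 : l = i
        · subst h1; simp [Finsupp.single_apply, hij.symm]
        · simp [Finsupp.single_apply, Ne.symm h1]
      simp [hJ, pderiv_monomial, hij, this, mul_comm]

lemma aux_surj {k M : Type} [Field k] [AddCommGroup M] [Module k M] (d : ℕ) (j : Fin d)
    (x : Fin d → Module.End k M) (n J : Module.End k M)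
    (hJ : ∀ m, x j (J m) = m + n (J m))
    (hx : ∀ i, i ≠ j → ∀ m, x i (J m) = J (x i m))
    (hxn : ∀ i, ∀ m, x i (n m) = n (x i m))
    (hn : ∀ m, n (J m) = J (n m))
    (hnil : ∀ m, ∃ r : ℕ, (n ^ r) m = 0) (s : Set (Fin d)) (hs : j ∉ s) (m : M)
    (hm : ∀ i ∈ s, x i m = 0) : ∃ m', x j m' = m ∧ ∀ i ∈ s, x i m' = 0 := by
  obtain ⟨r, hr⟩ := hnil m
  induction r generalizing m with
  | zero =>
    have : m = 0 := by simpa using hr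
    exact ⟨0, by simp [this], by simp⟩
  | succ r ih =>
    have hc : Commute (n ^ r) J := (show Commute n J from LinearMap.ext hn).pow_left r
    have hne : ∀ i ∈ s, i ≠ j := fun i hi h => hs (h ▸ hi)
    obtain ⟨m', h1, h2⟩ := ih (n (J m))
      (fun i hi => by rw [hxn, hx i (hne i hi), hm i hi]; simp)
      (by
        rw [hn]
        have := LinearMap.congr_fun hc.eq (n m)
        simp only [Module.End.mul_apply] at this
        have h2 : (n ^ r) (n m) = 0 := by rw [← Module.End.mul_apply, ← pow_succ, hr]
        rw [this, h2, map_zero])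
    refine ⟨J m - m', by rw [map_sub, hJ, h1]; abel, fun i hi => ?_⟩
    rw [map_sub, h2 i hi, hx i (hne i hi), hm i hi]; simp

open MvPolynomial in
lemma aux_ext_quot (k : Type) [Field k] (d : ℕ) (M : Type) [AddCommGroup M]
    [Module (MvPolynomial (Fin d) k) M]
    (hsurj : ∀ (s : Set (Fin d)) (j : Fin d), j ∉ s → ∀ m : M,
      (∀ i ∈ s, (X i : MvPolynomial (Fin d) k) • m = 0) →
      ∃ m' : M, (X j : MvPolynomial (Fin d) k) • m' = m ∧
        ∀ i ∈ s, (X i : MvPolynomial (Fin d) k) • m' = 0)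
    (s : Finset (Fin d)) (n : ℕ) :
    Subsingleton (Abelian.Ext.{0}
      (ModuleCat.of (MvPolynomial (Fin d) k) (MvPolynomial (Fin d) k ⧸
        (Ideal.span (X '' (s : Set (Fin d))) : Ideal (MvPolynomial (Fin d) k))))
      (ModuleCat.of (MvPolynomial (Fin d) k) M) (n+1)) := by
  classical
  induction s using Finset.induction_on generalizing n with
  | empty =>
    let e : (MvPolynomial (Fin d) k ⧸
        (Ideal.span (X '' ((∅ : Finset (Fin d)) : Set (Fin d))) : Ideal (MvPolynomial (Fin d) k)))
        ≃ₗ[MvPolynomial (Fin d) k] MvPolynomial (Fin d) k :=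
      Submodule.quotEquivOfEqBot _ (by simp)
    have : Module.Projective (MvPolynomial (Fin d) k) (MvPolynomial (Fin d) k ⧸
        (Ideal.span (X '' ((∅ : Finset (Fin d)) : Set (Fin d))) : Ideal (MvPolynomial (Fin d) k))) :=
      Module.Projective.of_equiv e.symm
    have := (IsProjective.iff_projective (R := MvPolynomial (Fin d) k) _).1 this
    exact Abelian.Ext.subsingleton_of_projective _ _ _
  | insert j s hj ih =>
    let I : Ideal (MvPolynomial (Fin d) k) := Ideal.span (X '' (s : Set (Fin d)))
    let I' : Ideal (MvPolynomial (Fin d) k) :=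
      Ideal.span (X '' ((insert j s : Finset (Fin d)) : Set (Fin d)))
    have hII : I ≤ I' := Ideal.span_mono (Set.image_mono (by simp))
    have hI' : I' = I ⊔ Ideal.span {X j} := by
      simp only [I, I', Finset.coe_insert, Set.image_insert_eq]
      rw [Ideal.span_insert, sup_comm]
    let f : (MvPolynomial (Fin d) k ⧸ I) →ₗ[MvPolynomial (Fin d) k] (MvPolynomial (Fin d) k ⧸ I) :=
      LinearMap.lsmul _ _ (X j)
    let g : (MvPolynomial (Fin d) k ⧸ I) →ₗ[MvPolynomial (Fin d) k] (MvPolynomial (Fin d) k ⧸ I') :=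
      Submodule.factor hII
    have hXj : (X j : MvPolynomial (Fin d) k) ∈ I' := Ideal.subset_span ⟨j, by simp, rfl⟩
    let T : ShortComplex (ModuleCat (MvPolynomial (Fin d) k)) :=
      ShortComplex.mk (ModuleCat.ofHom f) (ModuleCat.ofHom g) (by
        refine ModuleCat.hom_ext (LinearMap.ext fun x => ?_)
        obtain ⟨p, rfl⟩ := Submodule.Quotient.mk_surjective _ x
        change (Submodule.Quotient.mk (X j * p) : MvPolynomial (Fin d) k ⧸ I') = 0
        rw [Submodule.Quotient.mk_eq_zero]
        exact I'.mul_mem_right _ hXj)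
    have hT : T.ShortExact := by
      refine ShortComplex.ShortExact.mk' ?_ ?_ ?_
      · rw [ShortComplex.moduleCat_exact_iff]
        intro x hx
        obtain ⟨p, rfl⟩ := Submodule.Quotient.mk_surjective _ x
        have hp : p ∈ I' := by
          rw [← Submodule.Quotient.mk_eq_zero]; exact hx
        rw [hI', Submodule.mem_sup] at hp
        obtain ⟨a, ha, b, hb, rfl⟩ := hp
        obtain ⟨c, rfl⟩ := Ideal.mem_span_singleton.1 hb
        refine ⟨Submodule.Quotient.mk c, ?_⟩
        change (Submodule.Quotient.mk (X j * c) : MvPolynomial (Fin d) k ⧸ I) =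
          Submodule.Quotient.mk (a + X j * c)
        rw [eq_comm, Submodule.Quotient.eq]
        simpa using ha
      · rw [ModuleCat.mono_iff_injective]
        change Function.Injective f
        rw [injective_iff_map_eq_zero]
        intro x hx
        obtain ⟨p, rfl⟩ := Submodule.Quotient.mk_surjective _ x
        have hp : X j * p ∈ I := by
          rw [← Submodule.Quotient.mk_eq_zero]; exact hx
        rw [Submodule.Quotient.mk_eq_zero]
        simp only [I] at hp ⊢
        rw [mem_ideal_span_X_image] at hp ⊢
        intro m hm
        obtain ⟨i, hi, h⟩ := hp (Finsupp.single j 1 + m) (by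
          rw [mem_support_iff] at hm ⊢; rwa [coeff_X_mul])
        refine ⟨i, hi, ?_⟩
        have : j ≠ i := by rintro rfl; exact hj (by simpa using hi)
        simpa [Finsupp.single_apply, this] using h
      · rw [ModuleCat.epi_iff_surjective]
        exact Submodule.factor_surjective hII
    refine aux_step T hT (ModuleCat.of _ M) ih ih ?_ n
    intro φ
    let φ' : (MvPolynomial (Fin d) k ⧸ I) →ₗ[MvPolynomial (Fin d) k] M := φ.hom
    obtain ⟨m', h1, h2⟩ := hsurj s j (by simpa using hj) (φ' (Submodule.Quotient.mk 1)) (by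
      intro i hi
      rw [← map_smul, ← Submodule.Quotient.mk_smul, (Submodule.Quotient.mk_eq_zero I).2, map_zero]
      rw [smul_eq_mul, mul_one]
      exact Ideal.subset_span ⟨i, hi, rfl⟩)
    let ψ : (MvPolynomial (Fin d) k ⧸ I) →ₗ[MvPolynomial (Fin d) k] M :=
      Submodule.liftQ I (LinearMap.toSpanSingleton _ _ m') (by
        refine Ideal.span_le.2 ?_
        rintro _ ⟨i, hi, rfl⟩
        simpa using h2 i hi)
    refine ⟨ModuleCat.ofHom ψ, ?_⟩
    refine ModuleCat.hom_ext (LinearMap.ext fun x => ?_)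
    obtain ⟨p, rfl⟩ := Submodule.Quotient.mk_surjective _ x
    change (X j * p) • m' = φ' (Submodule.Quotient.mk p)
    rw [mul_comm, mul_smul, h1, ← map_smul, ← Submodule.Quotient.mk_smul, smul_eq_mul, mul_one]

/-- With `S = k[x₁,…,x_d]` acting on `M = V ⊗ₖ k[t₁,…,t_d]` via
`x_i ↦ N_i ⊗ id + id ⊗ ∂/∂t_i` (the `N_i` pairwise commuting and locally nilpotent)
and on `k = S/(x₁,…,x_d)` via the constant coefficient, one has `Ext^i_S(k, M) = 0`
for `i ≥ 1`, and `Hom_S(k, M)` is isomorphic to the joint invariants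
`{m ∈ M : x_i • m = 0 for all i}`. -/
theorem stmt5 (k : Type) [Field k] [CharZero k] (d : ℕ) (hd : 1 ≤ d)
    (V : Type) [AddCommGroup V] [Module k V]
    (N : Fin d → Module.End k V)
    (hcomm : ∀ i j : Fin d, Commute (N i) (N j))
    (hnil : ∀ (i : Fin d) (v : V), ∃ m : ℕ, (N i ^ m) v = 0)
    (φ : MvPolynomial (Fin d) k →ₐ[k]
      Module.End k (V ⊗[k] MvPolynomial (Fin d) k))
    (hφ : ∀ i : Fin d, φ (MvPolynomial.X i) =
      LinearMap.rTensor (MvPolynomial (Fin d) k) (N i) +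
        LinearMap.lTensor V (MvPolynomial.pderiv i).toLinearMap)
    [instM : Module (MvPolynomial (Fin d) k) (V ⊗[k] MvPolynomial (Fin d) k)]
    (hM : ∀ (p : MvPolynomial (Fin d) k) (m : V ⊗[k] MvPolynomial (Fin d) k),
      p • m = φ p m)
    [instk : Module (MvPolynomial (Fin d) k) k]
    (hk : ∀ (p : MvPolynomial (Fin d) k) (a : k),
      p • a = MvPolynomial.constantCoeff p * a) :
    (∀ i : ℕ, 1 ≤ i →
      Subsingleton
        (extGroup (MvPolynomial (Fin d) k)
          (ModuleCat.of (MvPolynomial (Fin d) k) k)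
          (ModuleCat.of (MvPolynomial (Fin d) k) (V ⊗[k] MvPolynomial (Fin d) k)) i)) ∧
    Nonempty ((k →ₗ[MvPolynomial (Fin d) k] (V ⊗[k] MvPolynomial (Fin d) k)) ≃+
      jointInvariants (S := MvPolynomial (Fin d) k) (M := V ⊗[k] MvPolynomial (Fin d) k)
        (fun i : Fin d => MvPolynomial.X i)) := by
  classical
  constructor
  · intro n hn
    obtain ⟨n, rfl⟩ : ∃ l, n = l + 1 := ⟨n - 1, by lia⟩
    refine aux_ext_of_abelianExt _ _ n ?_
    have hX : ∀ (i : Fin d) (m : V ⊗[k] MvPolynomial (Fin d) k),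
        (MvPolynomial.X i : MvPolynomial (Fin d) k) • m =
        LinearMap.rTensor (MvPolynomial (Fin d) k) (N i) m +
        LinearMap.lTensor V (MvPolynomial.pderiv i).toLinearMap m := by
      intro i m
      rw [hM, hφ]; rfl
    have key := aux_ext_quot k d (V ⊗[k] MvPolynomial (Fin d) k) (by
      intro s j hj m hm
      obtain ⟨J, hJ1, hJ2⟩ := aux_int k d j
      have hlr : ∀ (A : Module.End k V)
          (B : Module.End k (MvPolynomial (Fin d) k)) (m : V ⊗[k] MvPolynomial (Fin d) k),
          LinearMap.lTensor V B (LinearMap.rTensor _ A m) =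
          LinearMap.rTensor _ A (LinearMap.lTensor V B m) := by
        intro A B m
        rw [← LinearMap.comp_apply, ← LinearMap.comp_apply, LinearMap.lTensor_comp_rTensor,
          LinearMap.rTensor_comp_lTensor]
      have hll : ∀ (A B : Module.End k (MvPolynomial (Fin d) k))
          (m : V ⊗[k] MvPolynomial (Fin d) k),
          LinearMap.lTensor V A (LinearMap.lTensor V B m) = LinearMap.lTensor V (A ∘ₗ B) m := by
        intro A B m
        rw [LinearMap.lTensor_comp_apply]
      have hrr : ∀ (A B : Module.End k V)
          (m : V ⊗[k] MvPolynomial (Fin d) k),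
          LinearMap.rTensor _ A (LinearMap.rTensor _ B m) = LinearMap.rTensor _ (A ∘ₗ B) m := by
        intro A B m
        rw [LinearMap.rTensor_comp_apply]
      have := aux_surj d j (fun i => φ (MvPolynomial.X i)) 
        (LinearMap.rTensor (MvPolynomial (Fin d) k) (N j)) (LinearMap.lTensor V J)
        (by
          intro m
          rw [← hM, hX, hll, hJ1]
          simp [add_comm])
        (by
          intro i hi m
          simp only [← hM]
          rw [hX, hX, map_add, hll, hll, hJ2 i hi, hlr])
        (by
          intro i m
          simp only [← hM]
          rw [hX, hX, map_add, hrr, hrr, hlr]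
          congr 3
          exact (hcomm i j).eq)
        (by intro m; rw [hlr])
        (by
          intro m
          have hp : ∀ r : ℕ, (LinearMap.rTensor (MvPolynomial (Fin d) k) (N j)) ^ r =
            LinearMap.rTensor (MvPolynomial (Fin d) k) (N j ^ r) := fun r =>
              (LinearMap.rTensor_pow _ r)
          induction m using TensorProduct.induction_on with
          | zero => exact ⟨0, by simp⟩
          | tmul v p =>
            obtain ⟨r, hr⟩ := hnil j v
            exact ⟨r, by rw [hp, LinearMap.rTensor_tmul, hr, TensorProduct.zero_tmul]⟩
          | add a b ha hb =>
            obtain ⟨r, hr⟩ := ha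
            obtain ⟨t, ht⟩ := hb
            refine ⟨r + t, ?_⟩
            rw [map_add, pow_add, Module.End.mul_apply, Module.End.mul_apply, ht, map_zero,
              add_zero, ← Module.End.mul_apply, ← pow_add, add_comm, pow_add,
              Module.End.mul_apply, hr, map_zero])
        s hj m (by simpa only [← hM] using hm)
      simpa only [← hM] using this) Finset.univ n
    let q : MvPolynomial (Fin d) k →ₗ[MvPolynomial (Fin d) k] k :=
      LinearMap.toSpanSingleton _ _ (1 : k)
    have hq : ∀ p, q p = MvPolynomial.constantCoeff p := fun p => by
      simp only [q, LinearMap.toSpanSingleton_apply, hk, mul_one]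
    have hqs : Function.Surjective q := fun a => ⟨MvPolynomial.C a, by simp [hq]⟩
    have hker : (Ideal.span (MvPolynomial.X '' ((Finset.univ : Finset (Fin d)) : Set (Fin d))) :
        Ideal (MvPolynomial (Fin d) k)) = LinearMap.ker q := by
      ext p
      rw [MvPolynomial.mem_ideal_span_X_image, LinearMap.mem_ker, hq]
      constructor
      · intro h
        by_contra hc
        obtain ⟨i, -, hi⟩ := h 0 (by
          rwa [MvPolynomial.mem_support_iff])
        exact hi rfl
      · intro h m hm
        by_contra! hc
        have : m = 0 := by ext i; exact hc i (by simp)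
        subst this
        rw [MvPolynomial.mem_support_iff] at hm
        exact hm h
    let e := (Submodule.quotEquivOfEq _ _ hker).trans (q.quotKerEquivOfSurjective hqs)
    refine subsingleton_of_forall_eq 0 fun x => ?_
    let i := e.toModuleIso
    have h1 : x = (Abelian.Ext.mk₀ i.inv).comp ((Abelian.Ext.mk₀ i.hom).comp x (zero_add _))
        (zero_add _) := by
      simp [Abelian.Ext.mk₀_comp_mk₀_assoc]
    rw [h1, Subsingleton.elim ((Abelian.Ext.mk₀ i.hom).comp x (zero_add _)) 0,
      Abelian.Ext.comp_zero]
  · have hCk : ∀ a : k, (MvPolynomial.C a : MvPolynomial (Fin d) k) • (1 : k) = a := by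
      intro a; rw [hk]; simp
    have hinv : ∀ f : k →ₗ[MvPolynomial (Fin d) k] (V ⊗[k] MvPolynomial (Fin d) k),
        f 1 ∈ jointInvariants (S := MvPolynomial (Fin d) k) (M := V ⊗[k] MvPolynomial (Fin d) k)
          (fun i : Fin d => MvPolynomial.X i) := by
      intro f i
      change (MvPolynomial.X i : MvPolynomial (Fin d) k) • f 1 = 0
      rw [← map_smul, hk]; simp
    refine ⟨AddEquiv.ofBijective (AddMonoidHom.mk' (fun f => ⟨f 1, hinv f⟩) (fun f g => rfl)) ⟨?_, ?_⟩⟩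
    · intro f g hfg
      have h1 : f 1 = g 1 := congrArg Subtype.val hfg
      refine LinearMap.ext fun a => ?_
      rw [← hCk a, map_smul, map_smul, h1]
    · rintro ⟨m, hm⟩
      have hm' : ∀ i : Fin d, (MvPolynomial.X i : MvPolynomial (Fin d) k) • m = 0 := hm
      have hp : ∀ p : MvPolynomial (Fin d) k,
          p • m = (MvPolynomial.C (MvPolynomial.constantCoeff p) : MvPolynomial (Fin d) k) • m := by
        intro p
        induction p using MvPolynomial.induction_on with
        | C a => simp
        | add p q hp hq => rw [add_smul, hp, hq, ← add_smul]; simp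
        | mul_X p i hp => rw [mul_smul, hm']; simp
      refine ⟨{ toFun := fun a => (MvPolynomial.C a : MvPolynomial (Fin d) k) • m
                map_add' := fun a b => by rw [map_add, add_smul]
                map_smul' := fun p a => ?_ }, ?_⟩
      · rw [RingHom.id_apply, hk, map_mul, mul_comm, mul_smul, ← hp, ← mul_smul, mul_comm, mul_smul]
      · apply Subtype.ext
        change (MvPolynomial.C 1 : MvPolynomial (Fin d) k) • m = m
        simp
end

section
/- Let k be a field of characteristic zero and V a k-vector space. Let T(V) be the free (tensor) associative algebra on V, and let Δ : T(V) → T(V) ⊗_k T(V) be the unique k-algebra homomorphism with Δ(v) = v ⊗ 1 + 1 ⊗ v for all v ∈ V. Then the set of primitive elements of T(V), i.e. {a ∈ T(V) : Δ(a) = a ⊗ 1 + 1 ⊗ a}, equals the image of the canonical Lie algebra homomorphism from the free Lie algebra L(V) on V into T(V) (where T(V) is regarded as a Lie algebra under the commutator bracket and the map extends the inclusion of V). -/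
open scoped TensorProduct

attribute [local instance 100] LieRing.ofAssociativeRing

namespace Friedrichs

open Polynomial

section

variable {k : Type} [Field k] {V : Type} [AddCommGroup V] [Module k V]

/-- Induction on the tensor algebra by left multiplication with vectors. -/
theorem left_induction {P : TensorAlgebra k V → Prop}
    (h1 : P 1) (hs : ∀ (c : k) (x : TensorAlgebra k V), P x → P (c • x))
    (hv : ∀ (v : V) (x : TensorAlgebra k V), P x → P (TensorAlgebra.ι k v * x))
    (hadd : ∀ x y : TensorAlgebra k V, P x → P y → P (x + y))
    (x : TensorAlgebra k V) : P x := by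
  have key : ∀ x : TensorAlgebra k V, ∀ y : TensorAlgebra k V, P y → P (x * y) := by
    intro x
    induction x using TensorAlgebra.induction with
    | algebraMap r => intro y hy; rw [← Algebra.smul_def]; exact hs _ _ hy
    | ι v => exact fun y hy => hv v y hy
    | mul a b ha hb => intro y hy; rw [mul_assoc]; exact ha _ (hb _ hy)
    | add a b ha hb => intro y hy; rw [add_mul]; exact hadd _ _ (ha _ hy) (hb _ hy)
  have := key x 1 h1
  simpa using this

variable (k V) in
/-- The Euler (degree) derivation. -/
theorem exists_euler : ∃ E : Module.End k (TensorAlgebra k V), E 1 = 0 ∧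
    (∀ v, E (TensorAlgebra.ι k v) = TensorAlgebra.ι k v) ∧
    ∀ x y, E (x * y) = x * E y + E x * y := by
  let A := TrivSqZeroExt (TensorAlgebra k V) (TensorAlgebra k V)
  let j : V →ₗ[k] A :=
    { toFun := fun v => (TensorAlgebra.ι k v, TensorAlgebra.ι k v)
      map_add' := fun v w => by
        ext
        · exact map_add (TensorAlgebra.ι k) v w
        · exact map_add (TensorAlgebra.ι k) v w
      map_smul' := fun c v => by
        ext
        · exact map_smul (TensorAlgebra.ι k) c v
        · exact map_smul (TensorAlgebra.ι k) c v }
  let φ : TensorAlgebra k V →ₐ[k] A := TensorAlgebra.lift k j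
  have hfst : ∀ x, (φ x).fst = x := by
    intro x
    have : (TrivSqZeroExt.fstHom k (TensorAlgebra k V) (TensorAlgebra k V)).comp φ
        = AlgHom.id k _ := by
      apply TensorAlgebra.hom_ext
      ext v
      simp only [φ, LinearMap.comp_apply, AlgHom.toLinearMap_apply, AlgHom.comp_apply,
        TensorAlgebra.lift_ι_apply]
      rfl
    exact DFunLike.congr_fun this x
  refine ⟨{ toFun := fun x => (φ x).snd
            map_add' := fun x y => by rw [map_add]; rfl
            map_smul' := fun c x => by rw [map_smul]; rfl }, ?_, ?_, ?_⟩
  · change (φ 1).snd = 0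
    rw [map_one]; rfl
  · intro v
    change (φ _).snd = _
    simp only [φ, TensorAlgebra.lift_ι_apply]
    rfl
  · intro x y
    change (φ _).snd = x * (φ y).snd + (φ x).snd * y
    rw [map_mul, TrivSqZeroExt.snd_mul, hfst, hfst]
    rfl

variable (k V) in
/-- The antipode. -/
theorem exists_antipode : ∃ S : Module.End k (TensorAlgebra k V), S 1 = 1 ∧
    ∀ v x, S (TensorAlgebra.ι k v * x) = - (S x * TensorAlgebra.ι k v) := by
  let φ : TensorAlgebra k V →ₐ[k] (TensorAlgebra k V)ᵐᵒᵖ :=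
    TensorAlgebra.lift k
      (-((MulOpposite.opLinearEquiv k).toLinearMap ∘ₗ TensorAlgebra.ι k (M := V)))
  refine ⟨(MulOpposite.opLinearEquiv k).symm.toLinearMap ∘ₗ φ.toLinearMap, ?_, ?_⟩
  · simp
  · intro v x
    simp [φ]

/-- Polynomials in the Euler operator commute past a vector up to a shift. -/
theorem aeval_shift (E : Module.End k (TensorAlgebra k V))
    (hE : ∀ v, E (TensorAlgebra.ι k v) = TensorAlgebra.ι k v)
    (hm : ∀ x y, E (x * y) = x * E y + E x * y) (v : V) (p : k[X]) :
    ∀ x, aeval E p (TensorAlgebra.ι k v * x)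
      = TensorAlgebra.ι k v * aeval E (p.comp (X + 1)) x := by
  induction p using Polynomial.induction_on' with
  | add p q hp hq => intro x; simp [hp, hq, mul_add]
  | monomial n a =>
    rw [← C_mul_X_pow_eq_monomial]
    induction n with
    | zero => intro x; simp [Algebra.algebraMap_eq_smul_one]
    | succ n ih =>
      intro x
      rw [pow_succ, ← mul_assoc, map_mul (aeval E), aeval_X, Module.End.mul_apply, hm, hE, ← mul_add, ih,
        mul_comp, map_mul (aeval E), Module.End.mul_apply]
      simp [add_comm]

/-- Every tensor is sent to a scalar by a polynomial of the Euler operator which has no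
nonpositive integer root. -/
theorem exists_poly [CharZero k] (E : Module.End k (TensorAlgebra k V)) (hE1 : E 1 = 0)
    (hE : ∀ v, E (TensorAlgebra.ι k v) = TensorAlgebra.ι k v)
    (hm : ∀ x y, E (x * y) = x * E y + E x * y) (x : TensorAlgebra k V) :
    ∃ p : k[X], (∀ n : ℕ, p.eval (-(n : k)) ≠ 0) ∧
      ∃ c : k, aeval E p x = c • (1 : TensorAlgebra k V) := by
  have hscal : ∀ p : k[X], aeval E p (1 : TensorAlgebra k V) = p.eval 0 • 1 := by
    intro p
    obtain ⟨q, hq⟩ := X_dvd_sub_C (p := p)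
    have hp : p = q * X + C (p.coeff 0) := by rw [mul_comm, ← hq]; ring
    rw [hp]
    simp [hE1, Algebra.algebraMap_eq_smul_one]
  induction x using left_induction with
  | h1 => exact ⟨1, by simp, 1, by simp⟩
  | hs c x h =>
    obtain ⟨p, hp, d, hd⟩ := h
    exact ⟨p, hp, c * d, by rw [map_smul, hd, mul_smul]⟩
  | hv v x h =>
    obtain ⟨p, hp, d, hd⟩ := h
    refine ⟨(X - 1) * p.comp (X - 1), ?_, 0, ?_⟩
    · intro n
      have h1 := hp (n + 1)
      have h2 : (-(n : k) - 1) ≠ 0 := by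
        have : ((n + 1 : ℕ) : k) ≠ 0 := Nat.cast_ne_zero.mpr (by omega)
        intro h
        apply this
        push_cast
        linear_combination -h
      have h3 : (-(n : k) - 1) = -((n + 1 : ℕ) : k) := by push_cast; ring
      simp only [eval_mul, eval_sub, eval_X, eval_one, eval_comp]
      refine mul_ne_zero h2 ?_
      rw [h3]
      exact h1
    · rw [aeval_shift E hE hm]
      have : ((X - 1) * p.comp (X - 1)).comp (X + 1) = X * p := by
        simp [comp_assoc]
      rw [this, map_mul, Module.End.mul_apply, hd]
      simp [hE1]
  | hadd x y hx hy =>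
    obtain ⟨p, hp, c, hc⟩ := hx
    obtain ⟨q, hq, d, hd⟩ := hy
    refine ⟨p * q, ?_, q.eval 0 * c + p.eval 0 * d, ?_⟩
    · intro n
      rw [eval_mul]
      exact mul_ne_zero (hp n) (hq n)
    · rw [map_add, add_smul]
      congr 1
      · rw [mul_comm, map_mul, Module.End.mul_apply, hc, map_smul, hscal, smul_smul, mul_comm]
      · rw [map_mul, Module.End.mul_apply, hd, map_smul, hscal, smul_smul, mul_comm]

variable (k V) in
/-- The Lie subalgebra of the tensor algebra generated by `V`. -/
noncomputable def lieV : LieSubalgebra k (TensorAlgebra k V) :=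
  LieSubalgebra.lieSpan k (TensorAlgebra k V) (Set.range (TensorAlgebra.ι k (M := V)))

theorem ι_mem (v : V) : TensorAlgebra.ι k v ∈ lieV k V :=
  LieSubalgebra.subset_lieSpan ⟨v, rfl⟩

theorem range_eq : (FreeLieAlgebra.lift k
    (fun v : V => TensorAlgebra.ι k v) : FreeLieAlgebra k V →ₗ⁅k⁆ TensorAlgebra k V).range
      = lieV k V := by
  apply le_antisymm
  · let g : FreeLieAlgebra k V →ₗ⁅k⁆ lieV k V :=
      FreeLieAlgebra.lift k (fun v : V => ⟨TensorAlgebra.ι k v, ι_mem v⟩)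
    have hg : (FreeLieAlgebra.lift k (fun v : V => TensorAlgebra.ι k v) :
        FreeLieAlgebra k V →ₗ⁅k⁆ TensorAlgebra k V) = (lieV k V).incl.comp g := by
      apply FreeLieAlgebra.hom_ext
      intro v
      simp [g]
    rintro _ ⟨x, rfl⟩
    rw [hg]
    exact (g x).2
  · refine LieSubalgebra.lieSpan_le.mpr ?_
    rintro _ ⟨v, rfl⟩
    exact ⟨FreeLieAlgebra.of k v, by simp⟩

theorem euler_mem (E : Module.End k (TensorAlgebra k V))
    (hE : ∀ v, E (TensorAlgebra.ι k v) = TensorAlgebra.ι k v)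
    (hm : ∀ x y, E (x * y) = x * E y + E x * y) (x : TensorAlgebra k V)
    (hx : x ∈ lieV k V) : E x ∈ lieV k V := by
  induction hx using LieSubalgebra.lieSpan_induction with
  | mem u hu => obtain ⟨v, rfl⟩ := hu; rw [hE]; exact ι_mem v
  | zero => rw [map_zero]; exact zero_mem _
  | add u v _ _ hu hv => rw [map_add]; exact add_mem hu hv
  | smul t u _ hu => rw [map_smul]; exact LieSubalgebra.smul_mem _ _ hu
  | lie u v h1 h2 hu hv =>
    have : E ⁅u, v⁆ = ⁅u, E v⁆ + ⁅E u, v⁆ := by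
      simp only [LieRing.of_associative_ring_bracket, map_sub, hm]; abel
    rw [this]
    exact add_mem (LieSubalgebra.lie_mem _ h1 hv) (LieSubalgebra.lie_mem _ hu h2)

theorem aeval_mem (E : Module.End k (TensorAlgebra k V))
    (h : ∀ x ∈ lieV k V, E x ∈ lieV k V) (p : k[X]) :
    ∀ x ∈ lieV k V, aeval E p x ∈ lieV k V := by
  induction p using Polynomial.induction_on' with
  | add p q hp hq =>
    intro x hx
    rw [map_add, LinearMap.add_apply]
    exact add_mem (hp x hx) (hq x hx)
  | monomial n a =>
    rw [← C_mul_X_pow_eq_monomial]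
    induction n with
    | zero =>
      intro x hx
      simpa [Algebra.algebraMap_eq_smul_one] using LieSubalgebra.smul_mem _ a hx
    | succ n ih =>
      intro x hx
      rw [pow_succ, ← mul_assoc, map_mul, aeval_X, Module.End.mul_apply]
      exact ih _ (h x hx)

theorem lie_primitive
    (Δ : TensorAlgebra k V →ₐ[k] TensorAlgebra k V ⊗[k] TensorAlgebra k V)
    (hΔ : ∀ v : V, Δ (TensorAlgebra.ι k v) =
      TensorAlgebra.ι k v ⊗ₜ[k] 1 + 1 ⊗ₜ[k] TensorAlgebra.ι k v)
    (x : TensorAlgebra k V) (hx : x ∈ lieV k V) : Δ x = x ⊗ₜ[k] 1 + 1 ⊗ₜ[k] x := by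
  induction hx using LieSubalgebra.lieSpan_induction with
  | mem u hu => obtain ⟨v, rfl⟩ := hu; exact hΔ v
  | zero => simp
  | add u v _ _ hu hv =>
    rw [map_add, hu, hv, TensorProduct.add_tmul, TensorProduct.tmul_add]; abel
  | smul t u _ hu =>
    rw [map_smul, hu, smul_add, TensorProduct.smul_tmul', TensorProduct.tmul_smul]
  | lie u v _ _ hu hv =>
    simp only [LieRing.of_associative_ring_bracket, map_sub, map_mul, hu, hv, add_mul, mul_add,
      Algebra.TensorProduct.tmul_mul_tmul, one_mul, mul_one, TensorProduct.sub_tmul,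
      TensorProduct.tmul_sub]
    abel

/-- The convolution of the Euler operator with the antipode takes values in Lie elements. -/
theorem conv_mem
    (Δ : TensorAlgebra k V →ₐ[k] TensorAlgebra k V ⊗[k] TensorAlgebra k V)
    (hΔ : ∀ v : V, Δ (TensorAlgebra.ι k v) =
      TensorAlgebra.ι k v ⊗ₜ[k] 1 + 1 ⊗ₜ[k] TensorAlgebra.ι k v)
    (E : Module.End k (TensorAlgebra k V)) (hE1 : E 1 = 0)
    (hE : ∀ v, E (TensorAlgebra.ι k v) = TensorAlgebra.ι k v)
    (hm : ∀ x y, E (x * y) = x * E y + E x * y)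
    (S : Module.End k (TensorAlgebra k V)) (hS1 : S 1 = 1)
    (hS : ∀ v x, S (TensorAlgebra.ι k v * x) = - (S x * TensorAlgebra.ι k v))
    (x : TensorAlgebra k V) :
    LinearMap.mul' k _ (TensorProduct.map E S (Δ x)) ∈ lieV k V := by
  have hI : ∀ (v : V) (z : TensorAlgebra k V ⊗[k] TensorAlgebra k V),
      LinearMap.mul' k _ (TensorProduct.map LinearMap.id S (Δ (TensorAlgebra.ι k v) * z))
      = TensorAlgebra.ι k v * LinearMap.mul' k _ (TensorProduct.map LinearMap.id S z)
        - LinearMap.mul' k _ (TensorProduct.map LinearMap.id S z) * TensorAlgebra.ι k v := by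
    intro v z
    induction z using TensorProduct.induction_on with
    | zero => simp
    | tmul a b =>
      simp [hΔ, add_mul, hS, mul_assoc, sub_eq_add_neg]
    | add a b ha hb => simp only [mul_add, add_mul, map_add, ha, hb]; abel
  have hθ : ∀ (v : V) (z : TensorAlgebra k V ⊗[k] TensorAlgebra k V),
      LinearMap.mul' k _ (TensorProduct.map E S (Δ (TensorAlgebra.ι k v) * z))
      = TensorAlgebra.ι k v * LinearMap.mul' k _ (TensorProduct.map LinearMap.id S z)
        + ⁅TensorAlgebra.ι k v, LinearMap.mul' k _ (TensorProduct.map E S z)⁆ := by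
    intro v z
    rw [LieRing.of_associative_ring_bracket]
    induction z using TensorProduct.induction_on with
    | zero => simp
    | tmul a b =>
      simp [hΔ, add_mul, hS, hm, hE, mul_assoc, sub_eq_add_neg]
      abel
    | add a b ha hb => simp only [mul_add, add_mul, map_add, ha, hb]; abel
  have hε : ∀ x : TensorAlgebra k V, ∃ c : k,
      LinearMap.mul' k _ (TensorProduct.map LinearMap.id S (Δ x))
        = c • (1 : TensorAlgebra k V) := by
    intro x
    induction x using left_induction with
    | h1 => exact ⟨1, by simp [Algebra.TensorProduct.one_def, hS1]⟩
    | hs c x h => obtain ⟨d, hd⟩ := h; exact ⟨c * d, by simp only [map_smul, hd, mul_smul]⟩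
    | hv v x h =>
      obtain ⟨d, hd⟩ := h
      exact ⟨0, by rw [map_mul, hI, hd]; simp⟩
    | hadd x y hx hy =>
      obtain ⟨c, hc⟩ := hx
      obtain ⟨d, hd⟩ := hy
      exact ⟨c + d, by simp only [map_add, hc, hd, add_smul]⟩
  induction x using left_induction with
  | h1 => simp [Algebra.TensorProduct.one_def, hE1]
  | hs c x h => simp only [map_smul]; exact LieSubalgebra.smul_mem _ _ h
  | hv v x h =>
    obtain ⟨d, hd⟩ := hε x
    rw [map_mul, hθ, hd, mul_smul_comm, mul_one]
    exact add_mem (LieSubalgebra.smul_mem _ _ (ι_mem v)) (LieSubalgebra.lie_mem _ (ι_mem v) h)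
  | hadd x y hx hy => simp only [map_add]; exact add_mem hx hy

theorem primitive_mem [CharZero k]
    (Δ : TensorAlgebra k V →ₐ[k] TensorAlgebra k V ⊗[k] TensorAlgebra k V)
    (hΔ : ∀ v : V, Δ (TensorAlgebra.ι k v) =
      TensorAlgebra.ι k v ⊗ₜ[k] 1 + 1 ⊗ₜ[k] TensorAlgebra.ι k v)
    (a : TensorAlgebra k V) (ha : Δ a = a ⊗ₜ[k] 1 + 1 ⊗ₜ[k] a) : a ∈ lieV k V := by
  obtain ⟨E, hE1, hE, hm⟩ := exists_euler k V
  obtain ⟨S, hS1, hS⟩ := exists_antipode k V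
  have h1 : E a ∈ lieV k V := by
    have := conv_mem Δ hΔ E hE1 hE hm S hS1 hS a
    rw [ha] at this
    simpa [hE1, hS1] using this
  obtain ⟨p, hp, c, hc⟩ := exists_poly E hE1 hE hm a
  have hp0 : p.coeff 0 ≠ 0 := by
    have := hp 0
    rwa [Nat.cast_zero, neg_zero, ← coeff_zero_eq_eval_zero] at this
  obtain ⟨q, hq⟩ := X_dvd_sub_C (p := p)
  have hpq : p = q * X + C (p.coeff 0) := by rw [mul_comm, ← hq]; ring
  have hl : aeval E q (E a) ∈ lieV k V := aeval_mem E (euler_mem E hE hm) q _ h1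
  have hsum : aeval E q (E a) + p.coeff 0 • a = c • (1 : TensorAlgebra k V) := by
    rw [← hc]
    conv_rhs => rw [hpq]
    simp [Algebra.algebraMap_eq_smul_one]
  have hprim := lie_primitive Δ hΔ _ hl
  have hcprim : Δ (c • (1 : TensorAlgebra k V))
      = (c • (1 : TensorAlgebra k V)) ⊗ₜ[k] 1 + 1 ⊗ₜ[k] (c • (1 : TensorAlgebra k V)) := by
    rw [← hsum, map_add, map_smul, ha, hprim]
    simp only [TensorProduct.add_tmul, TensorProduct.tmul_add, TensorProduct.tmul_smul,
      ← TensorProduct.smul_tmul', smul_add]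
    abel
  have hc0 : c • (1 : TensorAlgebra k V) = 0 := by
    rw [map_smul, map_one, Algebra.TensorProduct.one_def, TensorProduct.tmul_smul,
      ← TensorProduct.smul_tmul', left_eq_add, TensorProduct.smul_tmul'] at hcprim
    have := congrArg (fun z => LinearMap.mul' k (TensorAlgebra k V) z) hcprim
    simpa using this
  rw [hc0] at hsum
  have hmem : p.coeff 0 • a ∈ lieV k V := by
    rw [eq_neg_of_add_eq_zero_right hsum]
    exact neg_mem hl
  have := LieSubalgebra.smul_mem _ (p.coeff 0)⁻¹ hmem
  rwa [smul_smul, inv_mul_cancel₀ hp0, one_smul] at this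

end

end Friedrichs

/-- Friedrichs' criterion: in characteristic zero, the primitive elements of the
tensor algebra `T(V)` — for the coproduct `Δ` which is the unique algebra map with
`Δ(v) = v ⊗ 1 + 1 ⊗ v` — are exactly the image of the canonical Lie algebra
homomorphism from the free Lie algebra on `V` into `T(V)` (with its commutator
bracket) extending the inclusion of `V`. -/
theorem stmt6 (k : Type) [Field k] [CharZero k]
    (V : Type) [AddCommGroup V] [Module k V]
    (Δ : TensorAlgebra k V →ₐ[k] TensorAlgebra k V ⊗[k] TensorAlgebra k V)
    (hΔ : ∀ v : V, Δ (TensorAlgebra.ι k v) =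
      TensorAlgebra.ι k v ⊗ₜ[k] 1 + 1 ⊗ₜ[k] TensorAlgebra.ι k v)
    (f : FreeLieAlgebra k V →ₗ⁅k⁆ TensorAlgebra k V)
    (hf : f = FreeLieAlgebra.lift k (fun v : V => TensorAlgebra.ι k v)) :
    {a : TensorAlgebra k V | Δ a = a ⊗ₜ[k] 1 + 1 ⊗ₜ[k] a} = Set.range f := by
  have hr : Set.range f = (Friedrichs.lieV k V : Set (TensorAlgebra k V)) := by
    rw [← Friedrichs.range_eq, hf, LieHom.coe_range]
  rw [hr]
  ext a
  exact ⟨fun h => Friedrichs.primitive_mem Δ hΔ a h, fun h => Friedrichs.lie_primitive Δ hΔ a h⟩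
end
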